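/- Let m ≥ 1 be an integer, H₀ ∈ (1 − 1/(2m), 1), and let L : (0,∞) → (0,∞) be measurable, locally bounded, slowly varying at +∞ and bounded away from 0 and +∞ on every compact subset of (0,∞). Let e : ℝ → ℝ be square-integrable with ∫_ℝ e(u)² du = 1 and suppose: (i) |e(u)| ≤ C u^{H₀ − 3/2} L(u) for almost all u > 0, for some constant C; (ii) e(u) ~ C₀ u^{H₀ − 3/2} L(u) as u → +∞, where C₀ = (∫₀^∞ (u + u²)^{H₀ − 3/2} du)^{−1/2}; (iii) there exists γ with 0 < γ < min{H₀ − (1 − 1/(2m)), 1 − H₀} such that for every t > 0, sup_{y ∈ (0,t]} [∫_{−∞}^0 |e(u) e(xy + u)| du] / (x^{2H₀−2} L(x)² y^{2H₀ − 2 − 2γ}) → 0 as x → +∞. Then the covariance function R(x) := ∫_ℝ e(u) e(u + x) du satisfies R(x) / (x^{2H₀ − 2} L(x)²) → 1 as x → +∞. -/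

import Mathlib

open MeasureTheory Filter Set
open scoped Topology

noncomputable section

/-- `L : (0,∞) → (0,∞)` is slowly varying at `+∞`: `L(λx)/L(x) → 1` as `x → +∞`
for every `λ > 0`. -/
def SlowlyVaryingAtTop (L : ℝ → ℝ) : Prop :=
  ∀ lam : ℝ, 0 < lam → Tendsto (fun x => L (lam * x) / L x) atTop (𝓝 1)

/-- `L` is bounded away from `0` and `+∞` on every compact subset of `(0,∞)`. -/
def BddAwayOnCompacts (L : ℝ → ℝ) : Prop :=
  ∀ K : Set ℝ, K ⊆ Set.Ioi 0 → IsCompact K →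
    ∃ c C : ℝ, 0 < c ∧ ∀ x ∈ K, c ≤ L x ∧ L x ≤ C

lemma uct_aux (h : ℝ → ℝ) (hm : Measurable h)
    (hs : ∀ u, Tendsto (fun x => h (x + u) - h x) atTop (𝓝 0)) :
    ∃ X, ∀ x ≥ X, ∀ u, 0 ≤ u → u ≤ 1 → |h (x + u) - h x| ≤ 1 := by
  let F : ℝ → ℝ → ℝ := fun x v => min 1 |h (x + v) - h x|
  have hF0 : ∀ x v, 0 ≤ F x v := fun x v => le_min zero_le_one (abs_nonneg _)
  have hF1 : ∀ x v, F x v ≤ 1 := fun x v => min_le_left _ _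
  have hFm : ∀ x, Measurable (F x) := fun x => by
    show Measurable fun v => min 1 |h (x + v) - h x|
    fun_prop
  have hFi : ∀ x a b, IntervalIntegrable (F x) volume a b := by
    intro x a b
    refine (intervalIntegrable_const (c := (1:ℝ))).mono_fun (hFm x).aestronglyMeasurable ?_
    filter_upwards with v
    simp only [Real.norm_eq_abs]
    rw [abs_of_nonneg (hF0 x v)]; simpa using hF1 x v
  have hlim : Tendsto (fun x => ∫ v in (0:ℝ)..2, F x v) atTop (𝓝 (∫ v in (0:ℝ)..2, (0:ℝ))) := by
    refine intervalIntegral.tendsto_integral_filter_of_dominated_convergence (fun _ => 1) ?_ ?_ ?_ ?_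
    · exact Eventually.of_forall fun x => (hFm x).aestronglyMeasurable
    · refine Eventually.of_forall fun x => Eventually.of_forall fun v _ => ?_
      rw [Real.norm_eq_abs, abs_of_nonneg (hF0 x v)]; exact hF1 x v
    · exact intervalIntegrable_const
    · refine Eventually.of_forall fun v _ => ?_
      have := (hs v).abs
      have := (tendsto_const_nhds (x := (1:ℝ))).min this
      simpa using this
  simp only [intervalIntegral.integral_zero] at hlim
  obtain ⟨X, hX⟩ := eventually_atTop.1 (hlim.eventually (gt_mem_nhds (by norm_num : (0:ℝ) < 1/4)))
  refine ⟨X, fun x hx u hu0 hu1 => ?_⟩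
  have h1 := hX x hx
  have h2 := hX (x + u) (by linarith)
  have key : min 1 |h (x+u) - h x| ≤ (∫ v in (0:ℝ)..2, F x v) + ∫ v in (0:ℝ)..2, F (x+u) v := by
    have e1 : (∫ w in (0:ℝ)..1, F x (u + w)) ≤ ∫ v in (0:ℝ)..2, F x v := by
      rw [intervalIntegral.integral_comp_add_left (fun v => F x v)]
      exact intervalIntegral.integral_mono_interval (by linarith) (by linarith) (by linarith)
        (Eventually.of_forall fun v => hF0 x v) (hFi x _ _)
    have e2 : (∫ w in (0:ℝ)..1, F (x+u) w) ≤ ∫ v in (0:ℝ)..2, F (x+u) v :=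
      intervalIntegral.integral_mono_interval (by linarith) (by linarith) (by linarith)
        (Eventually.of_forall fun v => hF0 _ v) (hFi _ _ _)
    have hi1 : IntervalIntegrable (fun w => F x (u + w)) volume 0 1 := by
      have := (hFi x u (u+1)).comp_add_left u
      simpa using this
    have e3 : (∫ w in (0:ℝ)..1, min 1 |h (x+u) - h x|) ≤ ∫ w in (0:ℝ)..1, (F x (u + w) + F (x+u) w) := by
      refine intervalIntegral.integral_mono_on (by norm_num) intervalIntegrable_const
        (hi1.add (hFi _ _ _)) fun w _ => ?_
      have t : |h (x+u) - h x| ≤ |h (x+(u+w)) - h x| + |h (x+u+w) - h (x+u)| := by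
        rw [← add_assoc, abs_sub_comm (h (x+u+w)) (h (x+u))]
        have := abs_add_le (h (x+u+w) - h x) (h (x+u) - h (x+u+w))
        have e : h (x+u+w) - h x + (h (x+u) - h (x+u+w)) = h (x+u) - h x := by ring
        rw [e] at this; exact this
      show min 1 _ ≤ min 1 |h (x+(u+w)) - h x| + min 1 |h (x+u+w) - h (x+u)|
      have n1 := abs_nonneg (h (x+(u+w)) - h x)
      have n2 := abs_nonneg (h (x+u+w) - h (x+u))
      rcases min_cases 1 |h (x+(u+w)) - h x| with ⟨a, _⟩ | ⟨a, _⟩ <;>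
      rcases min_cases 1 |h (x+u+w) - h (x+u)| with ⟨b, _⟩ | ⟨b, _⟩ <;>
      rcases min_cases 1 |h (x+u) - h x| with ⟨c, _⟩ | ⟨c, _⟩ <;> rw [a, b, c] <;> linarith
    rw [intervalIntegral.integral_add hi1 (hFi _ _ _)] at e3
    simp only [intervalIntegral.integral_const, sub_zero, one_smul] at e3
    linarith
  rcases min_cases 1 |h (x+u) - h x| with ⟨c, _⟩ | ⟨c, _⟩ <;> rw [c] at key <;> linarith

lemma potter_aux (h : ℝ → ℝ) (hm : Measurable h)
    (hs : ∀ u, Tendsto (fun x => h (x + u) - h x) atTop (𝓝 0)) {ε : ℝ} (hε : 0 < ε) :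
    ∃ X, ∀ x ≥ X, ∀ u, 0 ≤ u → |h (x + u) - h x| ≤ 1 + ε * u := by
  obtain ⟨X, hX⟩ := uct_aux h hm hs
  obtain ⟨Y, hY⟩ := eventually_atTop.1
    ((hs 1).abs.eventually (gt_mem_nhds (by simpa using hε : |(0:ℝ)| < ε)))
  refine ⟨max X Y, fun x hx => ?_⟩
  have hxX := (le_max_left X Y).trans hx
  have hxY := (le_max_right X Y).trans hx
  have hn : ∀ n : ℕ, |h (x + n) - h x| ≤ ε * n := by
    intro n
    induction n with
    | zero => simp
    | succ n ih =>
      have := hY (x + n) (by have := n.cast_nonneg (α := ℝ); linarith)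
      push_cast
      rw [← add_assoc]
      have t := abs_sub_le (h (x+n+1)) (h (x+n)) (h x)
      nlinarith
  intro u hu
  have f1 := Nat.floor_le hu
  have f2 := Nat.lt_floor_add_one u
  have f0 := (Nat.floor u).cast_nonneg (α := ℝ)
  have a1 := hX (x + ⌊u⌋₊) (by linarith) (u - ⌊u⌋₊) (by linarith) (by linarith)
  have a2 := hn ⌊u⌋₊
  have t := abs_sub_le (h (x+u)) (h (x+⌊u⌋₊)) (h x)
  have e : x + ⌊u⌋₊ + (u - ⌊u⌋₊) = x + u := by ring
  rw [e] at a1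
  have := mul_le_mul_of_nonneg_left f1 hε.le
  linarith

lemma potter (L : ℝ → ℝ) (hLpos : ∀ x > 0, 0 < L x) (hLmeas : Measurable L)
    (hLslow : SlowlyVaryingAtTop L) {ε : ℝ} (hε : 0 < ε) :
    ∃ X > 0, ∀ x ≥ X, ∀ y ≥ x, L y ≤ Real.exp 1 * (y / x) ^ ε * L x ∧
      L x ≤ Real.exp 1 * (y / x) ^ ε * L y := by
  obtain ⟨X, hX⟩ := potter_aux (fun t => Real.log (L (Real.exp t))) (by fun_prop) (by
    intro u
    have h1 := (hLslow (Real.exp u) (Real.exp_pos u)).comp Real.tendsto_exp_atTop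
    have h2 := ((Real.continuousAt_log one_ne_zero).tendsto).comp h1
    rw [Real.log_one] at h2
    refine h2.congr fun x => ?_
    simp only [Function.comp]
    rw [Real.log_div (hLpos _ (by positivity)).ne' (hLpos _ (by positivity)).ne', ← Real.exp_add,
      add_comm]) hε
  refine ⟨Real.exp X, Real.exp_pos X, fun x hx y hy => ?_⟩
  have hx0 : 0 < x := (Real.exp_pos X).trans_le hx
  have hy0 : 0 < y := hx0.trans_le hy
  have h1 := hX (Real.log x) ((Real.le_log_iff_exp_le hx0).2 hx) (Real.log y - Real.log x)
    (sub_nonneg.2 (Real.log_le_log hx0 hy))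
  simp only [add_sub_cancel, Real.exp_log hx0, Real.exp_log hy0] at h1
  rw [abs_le] at h1
  have hE : ∀ z > 0, Real.exp 1 * (y / x) ^ ε * L z
      = Real.exp (1 + ε * (Real.log y - Real.log x) + Real.log (L z)) := by
    intro z hz
    rw [Real.exp_add, Real.exp_log (hLpos z hz), Real.exp_add, Real.rpow_def_of_pos (by positivity),
      Real.log_div hy0.ne' hx0.ne', mul_comm ε]
  rw [hE x hx0, hE y hy0, ← Real.log_le_iff_le_exp (hLpos y hy0),
    ← Real.log_le_iff_le_exp (hLpos x hx0)]
  constructor <;> linarith [h1.1, h1.2]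

lemma scaled_lim (L : ℝ → ℝ) (hLpos : ∀ x > 0, 0 < L x) (hLslow : SlowlyVaryingAtTop L)
    (f : ℝ → ℝ) (a c : ℝ) (hlim : Tendsto (fun u => f u / (u ^ a * L u)) atTop (𝓝 c))
    (v : ℝ) (hv : 0 < v) :
    Tendsto (fun x => f (x * v) / (x ^ a * L x)) atTop (𝓝 (c * v ^ a)) := by
  have h1 := hlim.comp (tendsto_id.atTop_mul_const hv)
  have h2 := (h1.mul_const (v ^ a)).mul (hLslow v hv)
  rw [mul_one] at h2
  refine h2.congr' ?_
  filter_upwards [eventually_gt_atTop 0] with x hx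
  have e1 := hLpos x hx
  have e2 := hLpos (x * v) (by positivity)
  simp only [Function.comp, id]
  rw [Real.mul_rpow hx.le hv.le, mul_comm v x]
  have := Real.rpow_pos_of_pos hx a
  have := Real.rpow_pos_of_pos hv a
  field_simp

lemma main_piece (L : ℝ → ℝ) (hLpos : ∀ x > 0, 0 < L x) (hLslow : SlowlyVaryingAtTop L)
    (f : ℝ → ℝ) (hfm : AEStronglyMeasurable f volume)
    (a c ε K X : ℝ) (hε : 0 < ε) (hε1 : -1 < a - ε) (hε2 : a + ε < -1/2) (hK : 0 ≤ K) (hX : 0 < X)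
    (hP : ∀ x ≥ X, ∀ y ≥ x, L y ≤ Real.exp 1 * (y / x) ^ ε * L x ∧
      L x ≤ Real.exp 1 * (y / x) ^ ε * L y)
    (hf0 : ∀ u ≤ X, f u = 0) (hfb : ∀ u > X, |f u| ≤ K * (u ^ a * L u))
    (hlim : Tendsto (fun u => f u / (u ^ a * L u)) atTop (𝓝 c)) :
    Tendsto (fun x => (∫ u in Ioi (0:ℝ), f u * f (u + x)) / (x ^ (2 * a + 1) * L x ^ 2)) atTop
      (𝓝 (c ^ 2 * ∫ v in Ioi (0:ℝ), (v + v ^ 2) ^ a)) := by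
  let G : ℝ → ℝ → ℝ := fun x v => (f (x * v) / (x ^ a * L x)) * (f (x * (v + 1)) / (x ^ a * L x))
  -- pointwise bounds
  have b1 : ∀ x ≥ X, ∀ v ≥ 1, |f (x * v) / (x ^ a * L x)| ≤ K * Real.exp 1 * v ^ (a + ε) := by
    intro x hx v hv
    have hx0 : 0 < x := hX.trans_le hx
    have hv0 : 0 < v := by linarith
    have hL := hLpos x hx0
    have hxa := Real.rpow_pos_of_pos hx0 a
    have hva := Real.rpow_pos_of_pos hv0 a
    rw [abs_div, abs_of_pos (mul_pos hxa hL), div_le_iff₀ (mul_pos hxa hL)]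
    rcases le_or_gt (x * v) X with h | h
    · rw [hf0 _ h, abs_zero]; positivity
    · refine (hfb _ h).trans ?_
      have p := (hP x hx (x * v) (by nlinarith)).1
      rw [mul_div_cancel_left₀ _ hx0.ne'] at p
      rw [Real.mul_rpow hx0.le hv0.le, Real.rpow_add hv0]
      calc K * (x ^ a * v ^ a * L (x * v)) ≤ K * (x ^ a * v ^ a * (Real.exp 1 * v ^ ε * L x)) := by
            gcongr
        _ = _ := by ring
  have b2 : ∀ x ≥ X, ∀ v, 0 < v → v ≤ 1 →
      |f (x * v) / (x ^ a * L x)| ≤ K * Real.exp 1 * v ^ (a - ε) := by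
    intro x hx v hv0 hv
    have hx0 : 0 < x := hX.trans_le hx
    have hL := hLpos x hx0
    have hxa := Real.rpow_pos_of_pos hx0 a
    have hva := Real.rpow_pos_of_pos hv0 a
    rw [abs_div, abs_of_pos (mul_pos hxa hL), div_le_iff₀ (mul_pos hxa hL)]
    rcases le_or_gt (x * v) X with h | h
    · rw [hf0 _ h, abs_zero]; positivity
    · refine (hfb _ h).trans ?_
      have p := (hP (x * v) h.le x (by nlinarith)).2
      have e : x / (x * v) = v⁻¹ := by field_simp
      rw [e, Real.inv_rpow hv0.le] at p
      rw [Real.mul_rpow hx0.le hv0.le, Real.rpow_sub hv0, div_eq_mul_inv]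
      calc K * (x ^ a * v ^ a * L (x * v))
          ≤ K * (x ^ a * v ^ a * (Real.exp 1 * (v ^ ε)⁻¹ * L x)) := by
            gcongr
        _ = _ := by ring
  let p : ℝ → ℝ := fun v => if v ≤ 1 then v ^ (a - ε) else v ^ (2 * (a + ε))
  have hGb : ∀ x ≥ X, ∀ v > 0, ‖G x v‖ ≤ (K * Real.exp 1) ^ 2 * p v := by
    intro x hx v hv
    have h2 := b1 x hx (v + 1) (by linarith)
    rw [Real.norm_eq_abs, abs_mul]
    by_cases h : v ≤ 1
    · have h1 := b2 x hx v hv h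
      have h3 : (v + 1) ^ (a + ε) ≤ 1 := Real.rpow_le_one_of_one_le_of_nonpos (by linarith) (by linarith)
      simp only [p, if_pos h]
      calc _ ≤ (K * Real.exp 1 * v ^ (a - ε)) * (K * Real.exp 1 * 1) := by
            refine mul_le_mul h1 (h2.trans ?_) (abs_nonneg _) (by positivity)
            gcongr
        _ = _ := by ring
    · have h1 := b1 x hx v (by linarith)
      have h3 : (v + 1) ^ (a + ε) ≤ v ^ (a + ε) :=
        Real.rpow_le_rpow_of_nonpos hv (by linarith) (by linarith)
      simp only [p, if_neg h]
      calc _ ≤ (K * Real.exp 1 * v ^ (a + ε)) * (K * Real.exp 1 * v ^ (a + ε)) := by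
            refine mul_le_mul h1 (h2.trans ?_) (abs_nonneg _) (by positivity)
            gcongr
        _ = (K * Real.exp 1) ^ 2 * (v ^ (a + ε) * v ^ (a + ε)) := by ring
        _ = _ := by rw [← Real.rpow_add hv, two_mul]
  have hpi : IntegrableOn p (Ioi 0) := by
    rw [← Ioc_union_Ioi_eq_Ioi (zero_le_one (α := ℝ))]
    refine IntegrableOn.union ?_ ?_
    · have : IntegrableOn (fun v : ℝ => v ^ (a - ε)) (Ioc 0 1) :=
        (intervalIntegrable_iff_integrableOn_Ioc_of_le zero_le_one).1
          (intervalIntegral.intervalIntegrable_rpow' hε1)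
      refine this.congr_fun (fun v hv => ?_) measurableSet_Ioc
      simp only [p, if_pos hv.2]
    · have := integrableOn_Ioi_rpow_of_lt (show 2 * (a + ε) < -1 by linarith) zero_lt_one
      refine this.congr_fun (fun v hv => ?_) measurableSet_Ioi
      simp only [p, if_neg (not_le.2 (mem_Ioi.1 hv))]
  have hGm : ∀ x > 0, AEStronglyMeasurable (G x) volume := by
    intro x hx
    have m0 : AEStronglyMeasurable (fun v => f (x * v)) volume :=
      hfm.comp_quasiMeasurePreserving ⟨by fun_prop, by
        rw [Real.map_volume_mul_left hx.ne']
        exact Measure.smul_absolutelyContinuous⟩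
    have m1 : AEStronglyMeasurable (fun v => f (x * (v + 1))) volume :=
      m0.comp_quasiMeasurePreserving (measurePreserving_add_right volume (1:ℝ)).quasiMeasurePreserving
    simp only [G, div_eq_mul_inv]
    exact (m0.mul_const _).mul (m1.mul_const _)
  have hDCT : Tendsto (fun x => ∫ v in Ioi (0:ℝ), G x v) atTop
      (𝓝 (∫ v in Ioi (0:ℝ), c ^ 2 * (v + v ^ 2) ^ a)) := by
    refine tendsto_integral_filter_of_dominated_convergence (fun v => (K * Real.exp 1) ^ 2 * p v)
      ?_ ?_ (hpi.const_mul _) ?_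
    · filter_upwards [eventually_gt_atTop 0] with x hx using (hGm x hx).restrict
    · filter_upwards [eventually_ge_atTop X] with x hx
      filter_upwards [ae_restrict_mem measurableSet_Ioi] with v hv using hGb x hx v hv
    · filter_upwards [ae_restrict_mem measurableSet_Ioi] with v hv
      have hv : 0 < v := hv
      have := (scaled_lim L hLpos hLslow f a c hlim v hv).mul
        (scaled_lim L hLpos hLslow f a c hlim (v + 1) (by linarith))
      have e : c ^ 2 * (v + v ^ 2) ^ a = c * v ^ a * (c * (v + 1) ^ a) := by
        have : v + v ^ 2 = v * (v + 1) := by ring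
        rw [this, Real.mul_rpow hv.le (by linarith)]; ring
      rw [e]; exact this
  rw [integral_const_mul] at hDCT
  refine hDCT.congr' ?_
  filter_upwards [eventually_gt_atTop 0] with x hx
  have hL := hLpos x hx
  have hxa := Real.rpow_pos_of_pos hx a
  have h1 := integral_comp_mul_left_Ioi (fun u => f u * f (u + x)) 0 hx
  rw [mul_zero, smul_eq_mul] at h1
  have h2 : ∀ v, G x v = (f (x * v) * f (x * v + x)) * (x ^ a * L x)⁻¹ ^ 2 := by
    intro v
    simp only [G]
    rw [mul_add, mul_one]
    field_simp
  simp only [h2]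
  rw [integral_mul_const, h1, Real.rpow_add hx, Real.rpow_one, two_mul, Real.rpow_add hx]
  field_simp

lemma mid_piece (L : ℝ → ℝ) (hLpos : ∀ x > 0, 0 < L x)
    (e : ℝ → ℝ) (he : MemLp e 2 volume)
    (a ε K X : ℝ) (hε : 0 < ε) (hε1 : -1 < a - ε) (hε2 : a + ε < -1/2) (hK : 0 ≤ K) (hX : 0 < X)
    (hP : ∀ x ≥ X, ∀ y ≥ x, L y ≤ Real.exp 1 * (y / x) ^ ε * L x ∧
      L x ≤ Real.exp 1 * (y / x) ^ ε * L y)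
    (hfb : ∀ u > X, |e u| ≤ K * (u ^ a * L u)) :
    Tendsto (fun x => (∫ u in Ioc (0:ℝ) X, e u * e (u + x)) / (x ^ (2 * a + 1) * L x ^ 2)) atTop
      (𝓝 0) := by
  have hei : IntegrableOn (fun u => ‖e u‖) (Ioc 0 X) := by
    have : MemLp e 2 (volume.restrict (Ioc 0 X)) := he.restrict _
    exact (this.integrable (by norm_num)).norm
  let J := ∫ u in Ioc (0:ℝ) X, ‖e u‖
  have hJ : 0 ≤ J := integral_nonneg fun _ => norm_nonneg _
  let M := K * (Real.exp 1 * 2 ^ ε)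
  have hM : 0 ≤ M := by positivity
  have hLX := hLpos X hX
  let D := J * M * (Real.exp 1 * (X ^ ε)⁻¹ * (L X)⁻¹)
  refine squeeze_zero_norm' (a := fun x => D * x ^ (-(a - ε + 1))) ?_ ?_
  · filter_upwards [eventually_ge_atTop X] with x hx
    have hx0 : 0 < x := hX.trans_le hx
    have hL := hLpos x hx0
    have hxa := Real.rpow_pos_of_pos hx0 a
    have hb : ∀ u ∈ Ioc (0:ℝ) X, ‖e u * e (u + x)‖ ≤ ‖e u‖ * (M * (x ^ a * L x)) := by
      intro u hu
      have hu0 := hu.1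
      have huX := hu.2
      rw [norm_mul]
      gcongr
      refine (hfb (u + x) (by linarith)).trans ?_
      have p := (hP x hx (u + x) (by linarith)).1
      have q : ((u + x) / x) ^ ε ≤ 2 ^ ε := by
        refine Real.rpow_le_rpow (by positivity) ?_ hε.le
        rw [div_le_iff₀ hx0]; linarith
      have r : (u + x) ^ a ≤ x ^ a := Real.rpow_le_rpow_of_nonpos hx0 (by linarith) (by linarith)
      have hLu := hLpos (u + x) (by linarith)
      calc K * ((u + x) ^ a * L (u + x)) ≤ K * (x ^ a * (Real.exp 1 * 2 ^ ε * L x)) := by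
            gcongr
            refine p.trans ?_
            gcongr
        _ = _ := by simp only [M]; ring
    have h1 : ‖∫ u in Ioc (0:ℝ) X, e u * e (u + x)‖ ≤ J * (M * (x ^ a * L x)) := by
      refine (norm_integral_le_of_norm_le (hei.mul_const (M * (x ^ a * L x))) ?_).trans ?_
      · filter_upwards [ae_restrict_mem measurableSet_Ioc] with u hu using hb u hu
      · rw [integral_mul_const]
    have h2 := (hP X le_rfl x hx).2
    have hden : 0 < x ^ (2 * a + 1) * L x ^ 2 := by positivity
    rw [norm_div, Real.norm_of_nonneg hden.le, div_le_iff₀ hden]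
    refine h1.trans ?_
    rw [Real.div_rpow hx0.le hX.le] at h2
    have hxe := Real.rpow_pos_of_pos hx0 ε
    have hXe := Real.rpow_pos_of_pos hX ε
    have h3 : 1 ≤ Real.exp 1 * (X ^ ε)⁻¹ * (L X)⁻¹ * (x ^ ε * L x) := by
      rw [← div_le_div_iff_of_pos_right hLX, div_self hLX.ne'] at h2
      refine h2.trans (le_of_eq ?_)
      field_simp
    have e1 : x ^ (-(a - ε + 1)) * (x ^ (2 * a + 1)) = x ^ a * x ^ ε := by
      rw [← Real.rpow_add hx0, ← Real.rpow_add hx0]; congr 1; ring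
    calc J * (M * (x ^ a * L x)) = J * (M * (x ^ a * L x)) * 1 := by ring
      _ ≤ J * (M * (x ^ a * L x)) * (Real.exp 1 * (X ^ ε)⁻¹ * (L X)⁻¹ * (x ^ ε * L x)) := by
          gcongr
      _ = D * (x ^ a * x ^ ε) * L x ^ 2 := by simp only [D]; ring
      _ = _ := by rw [← e1]; ring
  · have := (tendsto_rpow_neg_atTop (show 0 < a - ε + 1 by linarith)).const_mul D
    simpa using this

/-- Asymptotics of the covariance function `R(x) = ∫ e(u) e(u+x) du` of the
moving-average kernel `e`: under the assumptions (i)–(iii) of the paper,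
`R(x) / (x^{2H₀-2} L(x)²) → 1` as `x → +∞`. -/
theorem covariance_asymptotics
    (m : ℕ) (hm : 1 ≤ m) (H₀ : ℝ) (hH₀ : H₀ ∈ Set.Ioo (1 - 1 / (2 * (m:ℝ))) 1)
    (L : ℝ → ℝ) (hLpos : ∀ x > 0, 0 < L x) (hLmeas : Measurable L)
    (hLloc : ∀ K : Set ℝ, K ⊆ Set.Ioi 0 → IsCompact K → ∃ C, ∀ x ∈ K, |L x| ≤ C)
    (hLslow : SlowlyVaryingAtTop L) (hLbdd : BddAwayOnCompacts L)
    (e : ℝ → ℝ) (he : MemLp e 2 volume)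
    (hnorm : (∫ u, e u ^ 2) = 1)
    (C : ℝ)
    (hbound : ∀ᵐ u : ℝ, 0 < u → |e u| ≤ C * u ^ (H₀ - 3 / 2) * L u)
    (hasymp : Tendsto
      (fun u : ℝ => e u /
        ((∫ v in Set.Ioi (0 : ℝ), (v + v ^ 2) ^ (H₀ - 3 / 2)) ^ (-(1 : ℝ) / 2)
          * u ^ (H₀ - 3 / 2) * L u))
      atTop (𝓝 1))
    (hgamma : ∃ γ : ℝ, 0 < γ ∧ γ < min (H₀ - (1 - 1 / (2 * (m:ℝ)))) (1 - H₀) ∧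
      ∀ t > (0 : ℝ), ∀ δ > (0 : ℝ), ∃ x₀ : ℝ, ∀ x ≥ x₀, ∀ y ∈ Set.Ioc (0 : ℝ) t,
        (∫ u in Set.Iio (0 : ℝ), |e u * e (x * y + u)|) ≤
          δ * (x ^ (2 * H₀ - 2) * L x ^ 2) * y ^ (2 * H₀ - 2 - 2 * γ)) :
    Tendsto (fun x : ℝ => (∫ u, e u * e (u + x)) / (x ^ (2 * H₀ - 2) * L x ^ 2))
      atTop (𝓝 1) := by
  have hH1 : 1 / 2 < H₀ := by
    have h1 : (1:ℝ) ≤ m := by exact_mod_cast hm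
    have h2 : 1 / (2 * (m:ℝ)) ≤ 1 / 2 := by
      apply one_div_le_one_div_of_le <;> linarith
    linarith [hH₀.1]
  have hH2 := hH₀.2
  obtain ⟨a, ha⟩ : ∃ a, a = H₀ - 3 / 2 := ⟨_, rfl⟩
  have hexp : 2 * H₀ - 2 = 2 * a + 1 := by rw [ha]; ring
  rw [← ha] at hasymp
  rw [hexp] at hgamma
  rw [hexp]
  set I := ∫ v in Set.Ioi (0 : ℝ), (v + v ^ 2) ^ a with hI
  set C₀ := I ^ (-(1 : ℝ) / 2) with hC₀
  have hI0 : 0 ≤ I := setIntegral_nonneg measurableSet_Ioi fun v hv => by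
    have : (0:ℝ) < v := hv
    positivity
  have hIne : I ≠ 0 := by
    intro h0
    have : C₀ = 0 := by rw [hC₀, h0, Real.zero_rpow (by norm_num)]
    rw [this] at hasymp
    simp only [zero_mul, div_zero] at hasymp
    exact zero_ne_one (tendsto_nhds_unique tendsto_const_nhds hasymp)
  have hIpos : 0 < I := lt_of_le_of_ne hI0 (Ne.symm hIne)
  have hC₀pos : 0 < C₀ := Real.rpow_pos_of_pos hIpos _
  have hCI : C₀ ^ 2 * I = 1 := by
    rw [hC₀, ← Real.rpow_natCast, ← Real.rpow_mul hI0]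
    norm_num
    rw [Real.rpow_neg_one]
    field_simp
  have hlim : Tendsto (fun u => e u / (u ^ a * L u)) atTop (𝓝 C₀) := by
    have := hasymp.const_mul C₀
    rw [mul_one] at this
    refine this.congr fun u => ?_
    rw [mul_assoc]
    rw [← mul_div_assoc, mul_div_mul_left _ _ hC₀pos.ne']
  obtain ⟨ε, hε, hε1, hε2⟩ : ∃ ε : ℝ, 0 < ε ∧ -1 < a - ε ∧ a + ε < -1/2 := by
    refine ⟨min (a + 1) (-a - 1/2) / 2, ?_, ?_, ?_⟩
    · have : 0 < min (a + 1) (-a - 1/2) := lt_min (by linarith) (by linarith)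
      linarith
    · have := min_le_left (a + 1) (-a - 1/2); linarith
    · have := min_le_right (a + 1) (-a - 1/2); linarith
  obtain ⟨X₁, hX₁, hP₁⟩ := potter L hLpos hLmeas hLslow hε
  obtain ⟨X₂, hX₂⟩ := eventually_atTop.1
    (hlim.abs.eventually (gt_mem_nhds (show |C₀| < |C₀| + 1 by linarith)))
  obtain ⟨X, hXX₁, hXX₂⟩ : ∃ X, X₁ ≤ X ∧ X₂ ≤ X := ⟨max X₁ X₂, le_max_left _ _, le_max_right _ _⟩
  have hX : 0 < X := hX₁.trans_le hXX₁
  have hP : ∀ x ≥ X, ∀ y ≥ x, L y ≤ Real.exp 1 * (y / x) ^ ε * L x ∧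
      L x ≤ Real.exp 1 * (y / x) ^ ε * L y := fun x hx => hP₁ x (hXX₁.trans hx)
  have hfb : ∀ u > X, |e u| ≤ (|C₀| + 1) * (u ^ a * L u) := by
    intro u hu
    have hu0 : 0 < u := hX.trans hu
    have h := hX₂ u (by linarith)
    have hL := hLpos u hu0
    have hp : 0 < u ^ a * L u := by positivity
    rw [abs_div, abs_of_pos hp, div_lt_iff₀ hp] at h
    exact h.le
  -- the three pieces
  let f : ℝ → ℝ := (Ioi X).indicator e
  have hfe : ∀ u > X, f u = e u := fun u hu => indicator_of_mem (s := Ioi X) hu e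
  have hfz : ∀ u ≤ X, f u = 0 := fun u hu => indicator_of_notMem (s := Ioi X) (not_lt.2 hu) e
  have p3 := main_piece L hLpos hLslow f (he.1.indicator measurableSet_Ioi) a C₀ ε (|C₀| + 1) X
    hε hε1 hε2 (by positivity) hX hP hfz (fun u hu => by rw [hfe u hu]; exact hfb u hu) (by
      refine hlim.congr' ?_
      filter_upwards [eventually_gt_atTop X] with u hu
      rw [hfe u hu])
  rw [← hI, hCI] at p3
  have p2 := mid_piece L hLpos e he a ε (|C₀| + 1) X hε hε1 hε2 (by positivity) hX hP hfb
  have p1 : Tendsto (fun x => (∫ u in Iio (0:ℝ), e u * e (u + x)) / (x ^ (2 * a + 1) * L x ^ 2))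
      atTop (𝓝 0) := by
    obtain ⟨γ, -, -, hg⟩ := hgamma
    rw [Metric.tendsto_atTop]
    intro δ hδ
    obtain ⟨x₀, hx₀⟩ := hg 1 one_pos (δ / 2) (by linarith)
    refine ⟨max x₀ 1, fun x hx => ?_⟩
    have hx0 : 0 < x := by linarith [(le_max_right x₀ 1).trans hx]
    have h := hx₀ x ((le_max_left _ _).trans hx) 1 ⟨one_pos, le_rfl⟩
    rw [Real.one_rpow, mul_one, mul_one] at h
    have hL := hLpos x hx0
    have hp : 0 < x ^ (2 * a + 1) * L x ^ 2 := by positivity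
    rw [dist_zero_right, norm_div, Real.norm_of_nonneg hp.le, div_lt_iff₀ hp]
    have h4 := norm_integral_le_integral_norm (μ := volume.restrict (Iio (0:ℝ)))
      (fun u => e u * e (u + x))
    simp only [Real.norm_eq_abs, add_comm _ x] at h4
    simp only [Real.norm_eq_abs, add_comm _ x]
    have : δ / 2 * (x ^ (2 * a + 1) * L x ^ 2) < δ * (x ^ (2 * a + 1) * L x ^ 2) := by
      apply mul_lt_mul_of_pos_right _ hp; linarith
    linarith
  have hsum := (p1.add p2).add p3
  rw [add_zero, zero_add] at hsum
  refine hsum.congr' ?_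
  filter_upwards [eventually_gt_atTop 0] with x hx
  have hint : Integrable (fun u => e u * e (u + x)) volume := by
    have h2 : MemLp (fun u => e (u + x)) 2 volume :=
      he.comp_measurePreserving (measurePreserving_add_right volume x)
    exact he.integrable_mul h2
  rw [← add_div, ← add_div]
  congr 1
  have q3 : (∫ u in Ioi (0:ℝ), f u * f (u + x)) = ∫ u in Ioi X, e u * e (u + x) := by
    have : ∀ u, f u * f (u + x) = (Ioi X).indicator (fun u => e u * e (u + x)) u := by
      intro u
      by_cases h : X < u
      · rw [hfe u h, hfe (u + x) (by linarith), indicator_of_mem (show u ∈ Ioi X from h)]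
      · rw [hfz u (not_lt.1 h), indicator_of_notMem (show u ∉ Ioi X from h), zero_mul]
    simp only [this]
    rw [setIntegral_indicator measurableSet_Ioi, Ioi_inter_Ioi, sup_of_le_right hX.le]
  rw [q3, add_assoc, ← setIntegral_union (Ioc_disjoint_Ioi le_rfl) measurableSet_Ioi
    hint.integrableOn hint.integrableOn, Ioc_union_Ioi_eq_Ioi hX.le, ← integral_Ici_eq_integral_Ioi,
    ← setIntegral_union (by
      rw [Set.disjoint_left]; intro u h1 h2; exact not_lt.2 (mem_Ici.1 h2) (mem_Iio.1 h1)) measurableSet_Ici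
    hint.integrableOn hint.integrableOn, Iio_union_Ici, setIntegral_univ]

end
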